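/- Let A = {0,1,2}, B = C = {0,1}, p_A(0) = p_A(2) = 10/21, p_A(1) = 1/21, and v = 0.84 (i.e., 21/25). The noisy distribution p_v(a,b,c) = v·p_A(a)·p_PR(b,c|a) + (1−v)/12, a mixture of the Bonet PR-box wired with the asymmetric input distribution p_A and uniform white noise, is NOT Evans-classical. -/

import Mathlib

open Finset

/-- `p : A → B → C → ℝ` is Evans-classical: it factorizes according to the
Evans causal structure with finite classical latent variables `Λ = Fin nΛ`, `M = Fin nM`. -/
def IsEvansClassical {A B C : Type*} [Fintype A] [Fintype B] [Fintype C]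
    (p : A → B → C → ℝ) : Prop :=
  ∃ (nΛ nM : ℕ) (qΛ : Fin nΛ → ℝ) (qM : Fin nM → ℝ)
    (kA : B → Fin nΛ → A → ℝ) (kB : Fin nΛ → Fin nM → B → ℝ)
    (kC : B → Fin nM → C → ℝ),
    (∀ l, 0 ≤ qΛ l) ∧ (∑ l, qΛ l = 1) ∧
    (∀ m, 0 ≤ qM m) ∧ (∑ m, qM m = 1) ∧
    (∀ b l a, 0 ≤ kA b l a) ∧ (∀ b l, ∑ a, kA b l a = 1) ∧
    (∀ l m b, 0 ≤ kB l m b) ∧ (∀ l m, ∑ b, kB l m b = 1) ∧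
    (∀ b m c, 0 ≤ kC b m c) ∧ (∀ b m, ∑ c, kC b m c = 1) ∧
    (∀ a b c, p a b c = ∑ l, ∑ m, qΛ l * qM m * kA b l a * kB l m b * kC b m c)

/-- The wiring function of the Bonet PR-box: `f(0,b) = 0`, `f(1,b) = b`,
`f(2,b) = b + 1 (mod 2)`. -/
def fBonet (a : Fin 3) (b : Fin 2) : Fin 2 :=
  if a = 0 then 0 else if a = 1 then b else b + 1

/-- The Bonet PR-box conditional distribution: `p_PR(b,c|a) = 1/2` if
`c = b + f(a,b) mod 2` and `0` otherwise. -/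
noncomputable def pPR (a : Fin 3) (b c : Fin 2) : ℝ :=
  if c = b + fBonet a b then 1 / 2 else 0

/-- The asymmetric input distribution `p_A(0) = p_A(2) = 10/21`, `p_A(1) = 1/21`. -/
noncomputable def pAasym (a : Fin 3) : ℝ :=
  if a = 1 then 1 / 21 else 10 / 21

/-!
Proof idea.  Put `Q(c₀,c₁) = ∑ₘ qM(m) p(c₀|0,m) p(c₁|1,m)` and
`P(a₀,a₁) = ∑ₗ qΛ(l) p(a₀|0,l) p(a₁|1,l)`.  Then `P(a₀,a₁) Q(c₀,c₁) = W + V` with `W, V ≥ 0`, where the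
marginal of `W` on `(a₀,c₀)` is `p(·,0,·)` and that of `V` on `(a₁,c₁)` is `p(·,1,·)`.
For fixed `Q` this is a linear feasibility problem, refuted by a Farkas certificate `(α, β)`;
the simplex of all `Q` is subdivided into tetrahedra, on each of which a certificate that is affine
in `Q` is given by its values at the four vertices.
-/

namespace BonetCert

/-- A vertex (unnormalised distribution of `(c₀,c₁)`). -/
structure Vtx where
  (y00 y01 y10 y11 : ℤ)

/-- A Farkas certificate: weights for the events `(a,0,c)` and `(a,1,c)`,
the latter not distinguishing `a = 0` and `a = 2`. -/
structure Cert where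
  (a00 a01 a10 a11 a20 a21 b00 b01 b10 b11 : ℤ)

def Vtx.val (v : Vtx) : Fin 2 → Fin 2 → ℤ := ![![v.y00, v.y01], ![v.y10, v.y11]]

def Cert.al (c : Cert) : Fin 3 → Fin 2 → ℤ := ![![c.a00, c.a01], ![c.a10, c.a11], ![c.a20, c.a21]]

def Cert.be (c : Cert) : Fin 3 → Fin 2 → ℤ := ![![c.b00, c.b01], ![c.b10, c.b11], ![c.b00, c.b01]]

/-- `150 · p(a,0,c)`. -/
def n0 : Fin 3 → Fin 2 → ℤ := ![![32, 2], ![5, 2], ![2, 32]]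

/-- `150 · p(a,1,c)`. -/
def n1 : Fin 3 → Fin 2 → ℤ := ![![2, 32], ![5, 2], ![2, 32]]

def Cert.obj (c : Cert) : ℤ :=
  ∑ a, ∑ i, (n0 a i * c.al a i + n1 a i * c.be a i)

def Cert.mx (c : Cert) (a₀ a₁ : Fin 3) (c₀ c₁ : Fin 2) : ℤ := max (c.al a₀ c₀) (c.be a₁ c₁)

def pair (v : Vtx) (c : Cert) (a₀ a₁ : Fin 3) : ℤ :=
  ∑ c₀, ∑ c₁, v.val c₀ c₁ * c.mx a₀ a₁ c₀ c₁

inductive CTree where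
  | leaf (c0 c1 c2 c3 : Cert)
  | split (m : Vtx) (l r : CTree)
  | sw12 (t : CTree)
  | sw13 (t : CTree)
  | sw02 (t : CTree)
  | sw03 (t : CTree)

def LeafOK (v : Fin 4 → Vtx) (c : Fin 4 → Cert) : Prop :=
  (∀ i, 0 < (c i).obj) ∧
    ∀ i j a₀ a₁, pair (v i) (c j) a₀ a₁ + pair (v j) (c i) a₀ a₁ ≤ 0

instance (v : Fin 4 → Vtx) (c : Fin 4 → Cert) : Decidable (LeafOK v c) := by
  unfold LeafOK; infer_instance

def MidOK (m v w : Vtx) : Prop := ∀ i j, 2 * m.val i j = v.val i j + w.val i j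

instance (m v w : Vtx) : Decidable (MidOK m v w) := by
  unfold MidOK; infer_instance

def check : CTree → Vtx → Vtx → Vtx → Vtx → Bool
  | .leaf c0 c1 c2 c3, v0, v1, v2, v3 => decide (LeafOK ![v0, v1, v2, v3] ![c0, c1, c2, c3])
  | .split m l r, v0, v1, v2, v3 =>
      decide (MidOK m v0 v1) && check l m v1 v2 v3 && check r v0 m v2 v3
  | .sw12 t, v0, v1, v2, v3 => check t v0 v2 v1 v3
  | .sw13 t, v0, v1, v2, v3 => check t v0 v3 v2 v1
  | .sw02 t, v0, v1, v2, v3 => check t v2 v1 v0 v3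
  | .sw03 t, v0, v1, v2, v3 => check t v3 v1 v2 v0

/-- `Q` lies in the cone spanned by the four vertices. -/
def InCone (Q : Fin 2 → Fin 2 → ℝ) (v0 v1 v2 v3 : Vtx) : Prop :=
  ∃ x0 x1 x2 x3 : ℝ, 0 ≤ x0 ∧ 0 ≤ x1 ∧ 0 ≤ x2 ∧ 0 ≤ x3 ∧
    ∀ i j, Q i j = x0 * v0.val i j + x1 * v1.val i j + x2 * v2.val i j + x3 * v3.val i j

/-- The linear feasibility problem for fixed `Q`. -/
structure Feas (Q : Fin 2 → Fin 2 → ℝ) (P : Fin 3 → Fin 3 → ℝ)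
    (W V : Fin 3 → Fin 3 → Fin 2 → Fin 2 → ℝ) : Prop where
  Qne : ∃ i j, Q i j ≠ 0
  Pnn : ∀ a b, 0 ≤ P a b
  Wnn : ∀ a b i j, 0 ≤ W a b i j
  Vnn : ∀ a b i j, 0 ≤ V a b i j
  sum : ∀ a b i j, W a b i j + V a b i j = P a b * Q i j
  hW : ∀ a i, ∑ b, ∑ j, W a b i j = (n0 a i : ℝ) / 150
  hV : ∀ b j, ∑ a, ∑ i, V a b i j = (n1 b j : ℝ) / 150

variable {Q : Fin 2 → Fin 2 → ℝ} {P : Fin 3 → Fin 3 → ℝ}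
  {W V : Fin 3 → Fin 3 → Fin 2 → Fin 2 → ℝ}

/-- A single certificate, integrated against a feasible point. -/
theorem obj_le (h : Feas Q P W V) (c : Cert) :
    (c.obj : ℝ) / 150 ≤ ∑ a, ∑ b, P a b * ∑ i, ∑ j, Q i j * (c.mx a b i j : ℝ) := by
  have e : (c.obj : ℝ) / 150 =
      ∑ a, ∑ b, ∑ i, ∑ j, (W a b i j * (c.al a i : ℝ) + V a b i j * (c.be b j : ℝ)) := by
    have e1 : (c.obj : ℝ) / 150 = ∑ a, ∑ i, ((n0 a i : ℝ) / 150 * (c.al a i : ℝ))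
        + ∑ b, ∑ j, ((n1 b j : ℝ) / 150 * (c.be b j : ℝ)) := by
      unfold Cert.obj
      push_cast
      simp only [Finset.sum_add_distrib, add_div, Finset.sum_div]
      congr 1 <;> exact Finset.sum_congr rfl fun _ _ => Finset.sum_congr rfl fun _ _ => by ring
    rw [e1]
    simp only [← h.hW, ← h.hV, Fin.sum_univ_two, Fin.sum_univ_three]
    ring
  rw [e]
  refine Finset.sum_le_sum fun a _ => Finset.sum_le_sum fun b _ => ?_
  rw [Finset.mul_sum]
  refine Finset.sum_le_sum fun i _ => ?_
  rw [Finset.mul_sum]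
  refine Finset.sum_le_sum fun j _ => ?_
  have h1 : (c.al a i : ℝ) ≤ (c.mx a b i j : ℝ) := by
    exact_mod_cast le_max_left (c.al a i) (c.be b j)
  have h2 : (c.be b j : ℝ) ≤ (c.mx a b i j : ℝ) := by
    exact_mod_cast le_max_right (c.al a i) (c.be b j)
  have h3 := mul_le_mul_of_nonneg_left h1 (h.Wnn a b i j)
  have h4 := mul_le_mul_of_nonneg_left h2 (h.Vnn a b i j)
  have h5 := h.sum a b i j
  calc _ ≤ (W a b i j + V a b i j) * (c.mx a b i j : ℝ) := by linarith
    _ = _ := by rw [h5]; ring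

theorem leaf_sound (h : Feas Q P W V) (v : Fin 4 → Vtx) (c : Fin 4 → Cert) (x : Fin 4 → ℝ)
    (hx : ∀ k, 0 ≤ x k) (hQ : ∀ i j, Q i j = ∑ k, x k * ((v k).val i j : ℝ))
    (hc : LeafOK v c) : False := by
  obtain ⟨hpos, hq⟩ := hc
  -- some multiplier is positive
  have hx' : ∃ k, 0 < x k := by
    by_contra hcon
    push Not at hcon
    obtain ⟨i, j, hij⟩ := h.Qne
    apply hij
    rw [hQ]
    refine Finset.sum_eq_zero fun k _ => ?_
    rw [le_antisymm (hcon k) (hx k), zero_mul]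
  have hlt : 0 < ∑ k, x k * ((c k).obj / 150 : ℝ) := by
    obtain ⟨k, hk⟩ := hx'
    have hp : ∀ k, (0 : ℝ) < (c k).obj / 150 := fun k => by
      have : (0 : ℝ) < (c k).obj := by exact_mod_cast hpos k
      positivity
    exact Finset.sum_pos' (fun k _ => mul_nonneg (hx k) (hp k).le)
      ⟨k, Finset.mem_univ _, mul_pos hk (hp k)⟩
  have hle : ∑ k, x k * ((c k).obj / 150 : ℝ) ≤
      ∑ k, x k * ∑ a, ∑ b, P a b * ∑ i, ∑ j, Q i j * ((c k).mx a b i j : ℝ) :=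
    Finset.sum_le_sum fun k _ => mul_le_mul_of_nonneg_left (obj_le h (c k)) (hx k)
  have hin : ∀ a b k, ∑ i, ∑ j, Q i j * ((c k).mx a b i j : ℝ) =
      ∑ l, x l * (pair (v l) (c k) a b : ℝ) := by
    intro a b k
    unfold pair
    push_cast
    simp only [hQ, Fin.sum_univ_two, Fin.sum_univ_four]
    ring
  have hswap : ∑ k, x k * ∑ a, ∑ b, P a b * ∑ i, ∑ j, Q i j * ((c k).mx a b i j : ℝ) =
      ∑ a, ∑ b, P a b * ∑ k, ∑ l, x k * x l * (pair (v l) (c k) a b : ℝ) := by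
    simp only [hin, Finset.mul_sum]
    rw [Finset.sum_comm]
    refine Finset.sum_congr rfl fun a _ => ?_
    rw [Finset.sum_comm]
    refine Finset.sum_congr rfl fun b _ => Finset.sum_congr rfl fun k _ =>
      Finset.sum_congr rfl fun l _ => by ring
  have hneg : ∀ a b, ∑ k, ∑ l, x k * x l * (pair (v l) (c k) a b : ℝ) ≤ 0 := by
    intro a b
    have e : 2 * ∑ k, ∑ l, x k * x l * (pair (v l) (c k) a b : ℝ) =
        ∑ k, ∑ l, x k * x l * ((pair (v k) (c l) a b + pair (v l) (c k) a b : ℤ) : ℝ) := by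
      push_cast
      simp only [mul_add, Finset.sum_add_distrib]
      rw [two_mul]
      congr 1
      rw [Finset.sum_comm]
      refine Finset.sum_congr rfl fun k _ => Finset.sum_congr rfl fun l _ => by ring
    have : ∑ k, ∑ l, x k * x l * ((pair (v k) (c l) a b + pair (v l) (c k) a b : ℤ) : ℝ) ≤ 0 :=
      Finset.sum_nonpos fun k _ => Finset.sum_nonpos fun l _ =>
        mul_nonpos_of_nonneg_of_nonpos (mul_nonneg (hx k) (hx l)) (by exact_mod_cast hq k l a b)
    linarith
  have : ∑ a, ∑ b, P a b * ∑ k, ∑ l, x k * x l * (pair (v l) (c k) a b : ℝ) ≤ 0 :=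
    Finset.sum_nonpos fun a _ => Finset.sum_nonpos fun b _ =>
      mul_nonpos_of_nonneg_of_nonpos (h.Pnn a b) (hneg a b)
  linarith

theorem check_sound (h : Feas Q P W V) (t : CTree) : ∀ v0 v1 v2 v3 : Vtx,
    check t v0 v1 v2 v3 = true → InCone Q v0 v1 v2 v3 → False := by
  induction t with
  | leaf c0 c1 c2 c3 =>
    rintro v0 v1 v2 v3 hc ⟨x0, x1, x2, x3, h0, h1, h2, h3, hQ⟩
    refine leaf_sound h ![v0, v1, v2, v3] ![c0, c1, c2, c3] ![x0, x1, x2, x3] ?_ ?_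
      (of_decide_eq_true hc)
    · intro k
      fin_cases k <;> assumption
    · intro i j
      rw [hQ, Fin.sum_univ_four]
      rfl
  | split m l r ihl ihr =>
    rintro v0 v1 v2 v3 hc ⟨x0, x1, x2, x3, h0, h1, h2, h3, hQ⟩
    simp only [check, Bool.and_eq_true, decide_eq_true_eq] at hc
    obtain ⟨⟨hm, hl⟩, hr⟩ := hc
    have hm' : ∀ i j, 2 * (m.val i j : ℝ) = v0.val i j + v1.val i j := fun i j => by
      exact_mod_cast hm i j
    rcases le_total x0 x1 with hle | hle
    · refine ihl _ _ _ _ hl ⟨2 * x0, x1 - x0, x2, x3, by linarith, by linarith, h2, h3, ?_⟩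
      intro i j
      rw [hQ]
      linear_combination (-x0) * hm' i j
    · refine ihr _ _ _ _ hr ⟨x0 - x1, 2 * x1, x2, x3, by linarith, by linarith, h2, h3, ?_⟩
      intro i j
      rw [hQ]
      linear_combination (-x1) * hm' i j
  | sw12 t ih =>
    rintro v0 v1 v2 v3 hc ⟨x0, x1, x2, x3, h0, h1, h2, h3, hQ⟩
    exact ih _ _ _ _ hc ⟨x0, x2, x1, x3, h0, h2, h1, h3, fun i j => by rw [hQ]; ring⟩
  | sw13 t ih =>
    rintro v0 v1 v2 v3 hc ⟨x0, x1, x2, x3, h0, h1, h2, h3, hQ⟩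
    exact ih _ _ _ _ hc ⟨x0, x3, x2, x1, h0, h3, h2, h1, fun i j => by rw [hQ]; ring⟩
  | sw02 t ih =>
    rintro v0 v1 v2 v3 hc ⟨x0, x1, x2, x3, h0, h1, h2, h3, hQ⟩
    exact ih _ _ _ _ hc ⟨x2, x1, x0, x3, h2, h1, h0, h3, fun i j => by rw [hQ]; ring⟩
  | sw03 t ih =>
    rintro v0 v1 v2 v3 hc ⟨x0, x1, x2, x3, h0, h1, h2, h3, hQ⟩
    exact ih _ _ _ _ hc ⟨x3, x1, x2, x0, h3, h1, h2, h0, fun i j => by rw [hQ]; ring⟩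

/-- The subdivision of the simplex of all `Q`, with the certificates on the cells. -/
def tree : CTree :=
  .split ⟨16, 16, 0, 0⟩
   (.sw02 (.split ⟨0, 16, 16, 0⟩
    (.sw03 (.split ⟨0, 16, 0, 16⟩
     (.sw02 (.split ⟨8, 24, 0, 0⟩
      (.sw03 (.split ⟨0, 24, 8, 0⟩
       (.leaf
         ⟨-9, -42, -9, 12, -24, 27, 27, -9, 27, -42⟩
         ⟨-18, -18, -5, -18, -18, 50, 50, -18, 24, -18⟩
         ⟨18, -18, -18, 18, -18, 18, -18, -18, 48, -18⟩
         ⟨-18, -33, -17, 20, -47, 50, 50, -18, 50, -47⟩)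
       (.sw12 (.split ⟨0, 16, 8, 8⟩
        (.sw03 (.split ⟨4, 20, 0, 8⟩
         (.sw02 (.split ⟨0, 20, 4, 8⟩
          (.leaf
            ⟨4, -28, 4, -28, -12, 0, -21, 0, 34, -28⟩
            ⟨0, -17, 0, -17, -16, 0, -17, 0, 47, -8⟩
            ⟨0, -25, 0, -25, -10, 4, -25, 0, 40, -25⟩
            ⟨8, -50, 8, -50, -16, 0, -17, 0, 28, -50⟩)
          (.sw12 (.split ⟨2, 22, 4, 4⟩
           (.leaf
             ⟨56, -399, -23, 32, -143, 62, -352, -11, 56, -399⟩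
             ⟨1, -340, -22, -138, -138, 81, -340, -6, 156, -138⟩
             ⟨63, -293, -82, 36, -183, 36, -278, -23, 262, -293⟩
             ⟨123, -501, -48, -113, -219, 29, -219, -31, 183, -501⟩)
           (.sw13 (.split ⟨0, 20, 8, 4⟩
            (.sw03 (.split ⟨1, 19, 6, 6⟩
             (.leaf
               ⟨113, -412, 8, -100, -36, 0, -412, 0, 8, -412⟩
               ⟨176, -501, -1, -173, -173, -1, -501, -1, -173, -415⟩
               ⟨63, -320, -37, -1, -37, -1, -320, -1, 180, -251⟩
               ⟨127, -501, 21, -113, -37, -1, -320, -1, -70, -501⟩)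
             (.sw02 (.sw13 (.split ⟨0, 20, 6, 6⟩
              (.sw02 (.split ⟨1, 21, 6, 4⟩
               (.leaf
                 ⟨549, -1836, 124, -276, -276, 603, -1836, -276, -796, -1836⟩
                 ⟨821, -2001, 185, -331, -331, 548, -2001, -331, -1234, -2001⟩
                 ⟨616, -1767, 167, -290, -332, 548, -1767, -330, -290, -1767⟩
                 ⟨616, -1767, 167, -290, -332, 548, -1767, -330, -290, -1767⟩)
               (.leaf
                 ⟨277, -1853, 59, -255, -259, 761, -1853, -255, -255, -1853⟩
                 ⟨587, -2001, 144, -319, -319, 699, -1992, -319, -824, -2001⟩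
                 ⟨663, -1925, 173, -290, -387, 634, -1833, -382, -290, -1925⟩
                 ⟨663, -1925, 173, -290, -400, 631, -1836, -380, -290, -1925⟩)))
              (.leaf
                ⟨159, -621, -200, 174, -192, 174, -620, -106, 438, -621⟩
                ⟨239, -993, -116, 190, -149, 190, -687, -116, 190, -993⟩
                ⟨159, -1001, -57, 144, -99, 234, -885, -78, 38, -1001⟩
                ⟨239, -1001, -135, 190, -149, 193, -687, -116, 198, -1001⟩))))))
            (.sw12 (.split ⟨0, 22, 6, 4⟩
             (.sw02 (.split ⟨0, 20, 6, 6⟩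
              (.leaf
                ⟨1461, -4626, 147, -245, -785, 1308, -4248, -785, -245, -4626⟩
                ⟨1070, -3781, -895, 1308, -895, 1308, -3781, -785, 1675, -3781⟩
                ⟨1087, -5000, 297, -654, -654, 1438, -3558, -654, -654, -5000⟩
                ⟨695, -4971, -112, 55, -721, 1569, -4285, -523, 55, -4971⟩)
              (.sw13 (.split ⟨1, 21, 6, 4⟩
               (.leaf
                 ⟨588, -2001, 144, -319, -324, 700, -1996, -319, -828, -2001⟩
                 ⟨276, -1852, 58, -255, -264, 762, -1852, -255, -255, -1852⟩
                 ⟨588, -2001, 144, -321, -321, 702, -1995, -321, -828, -2001⟩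
                 ⟨664, -1926, 173, -291, -384, 637, -1833, -384, -291, -1926⟩)
               (.leaf
                 ⟨821, -2001, 185, -330, -330, 548, -2001, -330, -1234, -2001⟩
                 ⟨549, -1834, 124, -275, -276, 603, -1834, -275, -795, -1834⟩
                 ⟨549, -1834, 124, -275, -275, 603, -1834, -275, -795, -1834⟩
                 ⟨616, -1768, 166, -290, -332, 548, -1768, -330, -290, -1768⟩)))))
             (.leaf
               ⟨445, -1938, 352, -1560, -621, 877, -1560, -294, -1338, -1938⟩
               ⟨562, -1820, 202, -500, -367, 803, -1820, -367, -944, -1820⟩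
               ⟨742, -1640, 262, -440, -440, 730, -1640, -440, -1040, -1640⟩
               ⟨381, -2001, 141, -561, -294, 877, -2001, -294, -847, -2001⟩)))))))))
         (.sw13 (.split ⟨4, 20, 4, 4⟩
          (.sw02 (.sw13 (.split ⟨2, 22, 4, 4⟩
           (.leaf
             ⟨31, -201, 8, -65, -201, 24, -201, 8, -10, -201⟩
             ⟨-2, -201, -1, -158, -103, 53, -201, -2, 153, -201⟩
             ⟨23, -201, -11, -154, -180, 28, -201, 23, -154, -154⟩
             ⟨72, -171, 27, -81, -169, 14, -169, -16, 23, -171⟩)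
           (.sw13 (.split ⟨0, 20, 8, 4⟩
            (.leaf
              ⟨1762, -4129, 333, -557, -3046, 926, -4129, -557, -2343, -4129⟩
              ⟨1965, -3926, 298, -592, -3926, 741, -3926, -743, -7, -3926⟩
              ⟨544, -5001, 345, -5001, -5001, 747, -5001, 345, -1009, -5001⟩
              ⟨890, -5001, 176, -714, -2141, 1484, -5001, -347, -1781, -5001⟩)
            (.leaf
              ⟨232, -1001, 89, -701, -147, 438, -807, -147, -701, -1001⟩
              ⟨371, -820, 131, -220, -220, 365, -820, -220, -520, -820⟩
              ⟨190, -1001, 70, -281, -147, 438, -1001, -147, -424, -1001⟩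
              ⟨190, -1001, 70, -281, -147, 438, -1001, -147, -424, -1001⟩))))))
          (.leaf
            ⟨-2, -11, -11, -11, -11, 20, -11, -2, -11, -11⟩
            ⟨2, -7, -7, 20, -7, 20, -7, -7, -7, -7⟩
            ⟨2, -7, -7, 20, -7, 20, -7, -7, -7, -7⟩
            ⟨2, -7, -7, 20, -7, 20, -7, -7, -7, -7⟩)))))
        (.leaf
          ⟨999, -1541, -210, -1541, -1541, 208, -1001, -210, -1541, -1541⟩
          ⟨499, -896, 69, -71, -797, 208, -896, -210, -106, -896⟩
          ⟨499, -1501, 34, -106, -399, 313, -1501, -106, -1501, -896⟩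
          ⟨-1, -2001, -1, -280, -1, 711, -2001, -1, -2001, -1⟩)))))
      (.sw13 (.split ⟨8, 16, 8, 0⟩
       (.sw02 (.split ⟨0, 16, 8, 8⟩
        (.leaf
          ⟨49, -101, -1, -1, -147, -1, -147, -1, -1, -101⟩
          ⟨69, -171, -1, -1, -147, -1, -147, -1, -71, -171⟩
          ⟨34, -201, -181, -201, -201, 36, -201, 36, -201, -201⟩
          ⟨-1, -201, -1, -1, -1, 72, -201, -1, -140, -62⟩)
        (.leaf
          ⟨-1, -144, -1, -130, -222, -1, -222, -1, 491, -144⟩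
          ⟨71, -247, 57, -241, -222, -1, -222, -1, 102, -247⟩
          ⟨7, -501, 7, -501, -428, 77, -143, 31, -25, -501⟩
          ⟨-1, -287, -1, -247, -143, 109, -287, -1, -32, -287⟩)))
       (.leaf
         ⟨0, -47, 0, -47, -50, 17, -12, 0, -12, -50⟩
         ⟨3, -50, 3, -50, -40, 7, -13, 3, -9, -50⟩
         ⟨0, -12, 0, -12, -20, 0, -20, 0, 47, -14⟩
         ⟨0, -24, 0, -24, -13, 10, -12, 0, -12, -24⟩)))))
     (.sw12 (.split ⟨8, 8, 0, 16⟩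
      (.leaf
        ⟨-1, -396, -125, -221, -501, 197, -396, -1, -125, -501⟩
        ⟨-1, -688, -1, -688, -1001, 394, -626, -1, -626, -1001⟩
        ⟨-1, -314, -1, -1, -396, -1, -396, -1, 686, -84⟩
        ⟨312, -1001, -1, -688, -606, -1, -396, -1, -314, -1001⟩)
      (.sw13 (.split ⟨0, 8, 8, 16⟩
       (.leaf
         ⟨3, -10, 0, -7, -7, 0, -7, 0, 2, -10⟩
         ⟨7, -20, 0, -13, -13, 0, -7, 0, -7, -20⟩
         ⟨0, -7, 0, 0, -5, 0, -7, 0, 13, 0⟩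
         ⟨0, -7, 0, -7, -18, 2, -7, 0, 13, -18⟩)
       (.leaf
         ⟨57, -1, 57, -1, -501, -1, -271, -1, 229, -501⟩
         ⟨56, -142, 56, -142, -227, -1, -160, -15, 225, -227⟩
         ⟨28, -201, 28, -201, -50, -1, -57, -30, 499, -201⟩
         ⟨28, -94, 28, -94, -294, 67, -107, -30, 157, -294⟩)))))))
    (.sw13 (.split ⟨0, 0, 16, 16⟩
     (.sw02 (.split ⟨8, 8, 0, 16⟩
      (.leaf
        ⟨25, -63, 25, -25, -125, 50, -75, -25, 25, -125⟩
        ⟨49, -37, 49, -37, -200, 0, -200, 0, 0, -200⟩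
        ⟨88, -200, -65, -200, -200, 0, -200, 0, 0, -200⟩
        ⟨44, -94, 6, -56, -44, 0, -44, -6, -44, -94⟩)
      (.leaf
        ⟨-1, -101, -1, -6, -1, 52, -101, -6, -66, -41⟩
        ⟨-1, -48, -1, -1, -59, 28, -59, -1, -1, -59⟩
        ⟨51, -6, 4, -6, -101, -6, -101, -6, -6, -101⟩
        ⟨31, -48, -1, -1, -59, -1, -59, -1, -33, -33⟩)))
     (.leaf
       ⟨5, -7, -7, -20, -20, 0, -20, 5, -7, -20⟩
       ⟨6, -5, 5, -5, -20, -5, -20, 5, -1, -14⟩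
       ⟨-7, -20, -7, -18, -7, 7, -20, 7, -5, -7⟩
       ⟨6, -6, 5, -5, -20, -5, -20, 5, -6, 1⟩)))))
   (.sw12 (.split ⟨16, 0, 16, 0⟩
    (.sw03 (.split ⟨0, 0, 16, 16⟩
     (.leaf
       ⟨6, -5, 5, -5, -20, -5, -20, 5, 0, -15⟩
       ⟨1, 0, 1, 0, -20, 0, -20, 5, 0, -15⟩
       ⟨-7, -20, -7, -18, -7, 7, -20, 7, -1, -12⟩
       ⟨1, -20, -20, -20, -20, -18, -20, 19, -20, -20⟩)
     (.sw13 (.split ⟨8, 0, 8, 16⟩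
      (.leaf
        ⟨-2, -16, -3, -14, -16, -1, -16, 6, -2, -16⟩
        ⟨-8, -21, -21, -21, -21, -10, -21, 18, -21, -21⟩
        ⟨-8, -21, -8, -19, -8, 6, -21, 6, 6, -21⟩
        ⟨5, -6, 5, -6, -21, -6, -21, 4, 5, -21⟩)
      (.sw12 (.split ⟨8, 8, 0, 16⟩
       (.leaf
         ⟨-1, -25, -1, -1, -30, 13, -30, -1, -1, -30⟩
         ⟨-1, -51, -1, -4, -23, 25, -51, -4, -4, -51⟩
         ⟨5, -19, -19, -4, -42, 2, -36, 5, -9, -42⟩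
         ⟨26, -4, 2, -4, -51, -4, -51, -4, -4, -51⟩)
       (.leaf
         ⟨23, 0, 23, 0, -100, 0, -100, 0, 0, -100⟩
         ⟨12, -32, 12, -12, -62, 25, -38, -12, 12, -62⟩
         ⟨27, -16, 17, -17, -87, 0, -31, -6, 0, -87⟩
         ⟨43, -100, 0, -100, -100, 0, -100, 0, -26, -100⟩)))))))
    (.sw13 (.split ⟨16, 0, 0, 16⟩
     (.sw02 (.split ⟨8, 8, 0, 16⟩
      (.leaf
        ⟨27, -27, 27, -27, -73, 50, -73, -27, -27, -73⟩
        ⟨54, 0, 54, 0, -200, 0, -200, 0, -112, -88⟩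
        ⟨27, -27, 27, -27, -102, 56, -56, -27, -56, -102⟩
        ⟨27, -27, 27, -27, -102, 56, -56, -27, -56, -102⟩)
      (.leaf
        ⟨0, -10, -10, -10, -10, 9, -10, 0, -10, -10⟩
        ⟨0, 0, 0, 0, -10, 5, -10, 0, -1, -9⟩
        ⟨0, 0, 0, 0, -10, 6, -6, 0, -10, -10⟩
        ⟨0, 0, 0, 0, -10, 6, -6, 0, -10, -10⟩)))
     (.leaf
       ⟨0, -5, -5, -5, -5, 5, -5, 3, -5, -5⟩
       ⟨-5, 5, -5, 5, -5, 5, -5, 5, -5, 5⟩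
       ⟨-5, 5, -5, 5, -5, 5, -5, 5, -5, 5⟩
       ⟨-5, 5, -5, 5, -5, 5, -5, 5, -5, 5⟩)))))

theorem check_tree : check tree ⟨32, 0, 0, 0⟩ ⟨0, 32, 0, 0⟩ ⟨0, 0, 32, 0⟩ ⟨0, 0, 0, 32⟩ = true := by
  decide +kernel

theorem not_feas (h : Feas Q P W V) (hQ : ∀ i j, 0 ≤ Q i j) : False := by
  refine check_sound h tree _ _ _ _ check_tree
    ⟨Q 0 0 / 32, Q 0 1 / 32, Q 1 0 / 32, Q 1 1 / 32, ?_, ?_, ?_, ?_, ?_⟩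
  · exact div_nonneg (hQ _ _) (by norm_num)
  · exact div_nonneg (hQ _ _) (by norm_num)
  · exact div_nonneg (hQ _ _) (by norm_num)
  · exact div_nonneg (hQ _ _) (by norm_num)
  · intro i j
    fin_cases i <;> fin_cases j <;> simp [Vtx.val]

end BonetCert

open BonetCert in
/-- With visibility `v = 0.84 = 21/25`, the noisy distribution
`p_v(a,b,c) = v·p_A(a)·p_PR(b,c|a) + (1−v)/12`, a mixture of the Bonet PR-box wired
with the asymmetric inputs `p_A` and uniform white noise, is NOT Evans-classical. -/
theorem noisy_asym_bonet_prbox_not_evansClassical :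
    ¬ IsEvansClassical (fun (a : Fin 3) (b c : Fin 2) =>
        (21 / 25 : ℝ) * (pAasym a * pPR a b c) + (1 - 21 / 25) / 12) := by

  rintro ⟨nL, nM, qL, qM, kA, kB, kC, hqL, sL, hqM, sM, hA, sA, hB, sB, hC, sC, hp⟩
  refine not_feas
    (Q := fun i j => ∑ m, qM m * (kC 0 m i * kC 1 m j))
    (P := fun a b => ∑ l, qL l * (kA 0 l a * kA 1 l b))
    (W := fun a b i j => ∑ l, ∑ m, qL l * qM m * (kA 0 l a * kA 1 l b) * kB l m 0 *
      (kC 0 m i * kC 1 m j))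
    (V := fun a b i j => ∑ l, ∑ m, qL l * qM m * (kA 0 l a * kA 1 l b) * kB l m 1 *
      (kC 0 m i * kC 1 m j)) ⟨?_, ?_, ?_, ?_, ?_, ?_, ?_⟩ ?_
  · by_contra hcon
    push Not at hcon
    have h1 : ∑ i, ∑ j, ∑ m, qM m * (kC 0 m i * kC 1 m j) = 1 := by
      have e : ∀ m, ∑ i, ∑ j, qM m * (kC 0 m i * kC 1 m j) = qM m := fun m => by
        have h0 := sC 0 m
        have h1 := sC 1 m
        simp only [← Finset.mul_sum, ← Finset.sum_mul, h0, h1, mul_one]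
      calc _ = ∑ m, ∑ i, ∑ j, qM m * (kC 0 m i * kC 1 m j) := by
            simp only [Fin.sum_univ_two, Finset.sum_add_distrib]
        _ = 1 := by simp only [e, sM]
    simp only [hcon, Finset.sum_const_zero] at h1
    exact zero_ne_one h1
  · exact fun a b => Finset.sum_nonneg fun l _ =>
      mul_nonneg (hqL l) (mul_nonneg (hA _ _ _) (hA _ _ _))
  · exact fun a b i j => Finset.sum_nonneg fun l _ => Finset.sum_nonneg fun m _ =>
      mul_nonneg (mul_nonneg (mul_nonneg (mul_nonneg (hqL l) (hqM m))
        (mul_nonneg (hA _ _ _) (hA _ _ _))) (hB _ _ _)) (mul_nonneg (hC _ _ _) (hC _ _ _))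
  · exact fun a b i j => Finset.sum_nonneg fun l _ => Finset.sum_nonneg fun m _ =>
      mul_nonneg (mul_nonneg (mul_nonneg (mul_nonneg (hqL l) (hqM m))
        (mul_nonneg (hA _ _ _) (hA _ _ _))) (hB _ _ _)) (mul_nonneg (hC _ _ _) (hC _ _ _))
  · intro a b i j
    rw [Finset.sum_mul_sum, ← Finset.sum_add_distrib]
    refine Finset.sum_congr rfl fun l _ => ?_
    rw [← Finset.sum_add_distrib]
    refine Finset.sum_congr rfl fun m _ => ?_
    have := sB l m
    rw [Fin.sum_univ_two] at this
    linear_combination (qL l * qM m * (kA 0 l a * kA 1 l b) * (kC 0 m i * kC 1 m j)) * this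
  · intro a i
    have e : ∑ b, ∑ j, ∑ l, ∑ m, qL l * qM m * (kA 0 l a * kA 1 l b) * kB l m 0 *
        (kC 0 m i * kC 1 m j) = ∑ l, ∑ m, qL l * qM m * kA 0 l a * kB l m 0 * kC 0 m i := by
      simp only [Fin.sum_univ_two (M := ℝ), Fin.sum_univ_three (M := ℝ), ← Finset.sum_add_distrib]
      refine Finset.sum_congr rfl fun l _ => Finset.sum_congr rfl fun m _ => ?_
      have h0 := sA 1 l
      have h1 := sC 1 m
      rw [Fin.sum_univ_two] at h1
      rw [Fin.sum_univ_three] at h0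
      have h2 : (kA 1 l 0 + kA 1 l 1 + kA 1 l 2) * (kC 1 m 0 + kC 1 m 1) = 1 := by
        rw [h0, h1, one_mul]
      linear_combination (qL l * qM m * kA 0 l a * kB l m 0 * kC 0 m i) * h2
    rw [e, ← hp a 0 i]
    fin_cases a <;> fin_cases i <;> norm_num [pAasym, pPR, fBonet, n0]
  · intro b j
    have e : ∑ a, ∑ i, ∑ l, ∑ m, qL l * qM m * (kA 0 l a * kA 1 l b) * kB l m 1 *
        (kC 0 m i * kC 1 m j) = ∑ l, ∑ m, qL l * qM m * kA 1 l b * kB l m 1 * kC 1 m j := by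
      simp only [Fin.sum_univ_two (M := ℝ), Fin.sum_univ_three (M := ℝ), ← Finset.sum_add_distrib]
      refine Finset.sum_congr rfl fun l _ => Finset.sum_congr rfl fun m _ => ?_
      have h0 := sA 0 l
      have h1 := sC 0 m
      rw [Fin.sum_univ_two] at h1
      rw [Fin.sum_univ_three] at h0
      have h2 : (kA 0 l 0 + kA 0 l 1 + kA 0 l 2) * (kC 0 m 0 + kC 0 m 1) = 1 := by
        rw [h0, h1, one_mul]
      linear_combination (qL l * qM m * kA 1 l b * kB l m 1 * kC 1 m j) * h2
    rw [e, ← hp b 1 j]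
    fin_cases b <;> fin_cases j <;> norm_num [pAasym, pPR, fBonet, n1,
      show (1 + 1 : Fin 2) = 0 from rfl]
  · exact fun i j => Finset.sum_nonneg fun m _ =>
      mul_nonneg (hqM m) (mul_nonneg (hC _ _ _) (hC _ _ _))
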